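/- Let F be a Finsler function on ℝⁿ. Then (ℝⁿ, F) is projectively flat — i.e. there exists a smooth diffeomorphism ψ of ℝⁿ onto an open subset of ℝⁿ such that for every geodesic γ : I → ℝⁿ of (ℝⁿ, F) there are a C² function f : I → ℝ with everywhere positive derivative and vectors a, b ∈ ℝⁿ, a ≠ 0, with ψ(γ(t)) = f(t)·a + b for all t — if and only if there exists a smooth diffeomorphism φ of ℝⁿ onto an open subset of ℝⁿ solving the second-order PDE system: for all x ∈ ℝⁿ, all y ≠ 0 and all i, ∑_s ∂²F/∂x^s∂y^i(x,y)·y^s − ∑_s ∂²F/∂x^i∂y^s(x,y)·y^s = ∑_{s,k,l,r} ∂²F̄/∂ȳ^r∂ȳ^l(φ(x), Dφ(x)·y) · [ (∂²φ^l/∂x^s∂x^k)(x)·(∂φ^r/∂x^i)(x) − (∂²φ^l/∂x^i∂x^k)(x)·(∂φ^r/∂x^s)(x) ] · y^s·y^k, where F̄ denotes the expression of F in the φ-coordinates. -/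

import Mathlib

open scoped BigOperators Topology
noncomputable section

abbrev E (n : ℕ) := Fin n → ℝ

/-- Partial derivative with respect to the base coordinate `x^i`. -/
def pdx {n : ℕ} (i : Fin n) (f : E n × E n → ℝ) (p : E n × E n) : ℝ :=
  fderiv ℝ f p (Pi.single i 1, 0)

/-- Partial derivative with respect to the fibre coordinate `y^i`. -/
def pdy {n : ℕ} (i : Fin n) (f : E n × E n → ℝ) (p : E n × E n) : ℝ :=
  fderiv ℝ f p (0, Pi.single i 1)

/-- A Finsler function on `ℝⁿ`. -/
structure IsFinsler {n : ℕ} (F : E n × E n → ℝ) : Prop where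
  smooth : ContDiffOn ℝ (⊤ : ℕ∞) F {p : E n × E n | p.2 ≠ 0}
  homog : ∀ (x y : E n) (c : ℝ), 0 < c → F (x, c • y) = c * F (x, y)
  pos : ∀ (x y : E n), y ≠ 0 → 0 < F (x, y)
  posDef : ∀ (x y : E n), y ≠ 0 →
    (Matrix.of fun i j : Fin n =>
      (1 / 2) * pdy i (pdy j (fun p => F p ^ 2)) (x, y)).PosDef

/-- A geodesic of `(ℝⁿ, F)`: a `C²` curve on a nontrivial open interval, with nowhere
vanishing velocity, positive constant speed, satisfying the Euler–Lagrange equations. -/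
structure IsGeodesic {n : ℕ} (F : E n × E n → ℝ) (γ : ℝ → E n) (t₁ t₂ : ℝ) : Prop where
  lt : t₁ < t₂
  smooth : ContDiffOn ℝ 2 γ (Set.Ioo t₁ t₂)
  vel : ∀ t ∈ Set.Ioo t₁ t₂, deriv γ t ≠ 0
  constSpeed : ∃ c : ℝ, 0 < c ∧ ∀ t ∈ Set.Ioo t₁ t₂, F (γ t, deriv γ t) = c
  eulerLagrange : ∀ (i : Fin n), ∀ t ∈ Set.Ioo t₁ t₂,
    deriv (fun s => pdy i F (γ s, deriv γ s)) t = pdx i F (γ t, deriv γ t)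

/-- The Hamel equations in the standard coordinates. -/
def SatisfiesHamel {n : ℕ} (F : E n × E n → ℝ) : Prop :=
  ∀ (x y : E n), y ≠ 0 → ∀ i : Fin n,
    ∑ k, pdx k (pdy i F) (x, y) * y k = ∑ k, pdx i (pdy k F) (x, y) * y k

/-- `(ℝⁿ, F)` is rectilinear in the standard coordinates. -/
def Rectilinear {n : ℕ} (F : E n × E n → ℝ) : Prop :=
  ∀ (γ : ℝ → E n) (t₁ t₂ : ℝ), IsGeodesic F γ t₁ t₂ →
    ∃ (f : ℝ → ℝ) (a b : E n), a ≠ 0 ∧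
      ContDiffOn ℝ 2 f (Set.Ioo t₁ t₂) ∧
      (∀ t ∈ Set.Ioo t₁ t₂, 0 < deriv f t) ∧
      ∀ t ∈ Set.Ioo t₁ t₂, γ t = f t • a + b

/-- `∂φ^m/∂x^s` : entry `m` of the Jacobian of `φ` applied to the `s`-th basis vector. -/
def Dphi {n : ℕ} (φ : E n → E n) (x : E n) (s m : Fin n) : ℝ :=
  fderiv ℝ φ x (Pi.single s 1) m

/-- `∂²φ^l/∂x^s∂x^k`. -/
def D2phi {n : ℕ} (φ : E n → E n) (x : E n) (s k l : Fin n) : ℝ :=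
  fderiv ℝ (fun x' => fderiv ℝ φ x' (Pi.single k 1) l) x (Pi.single s 1)

/-- `(ℝⁿ, F)` is projectively flat: a smooth diffeomorphism onto an open subset of `ℝⁿ`
takes all geodesics into straight lines (up to orientation-preserving reparametrization). -/
def ProjFlat {n : ℕ} (F : E n × E n → ℝ) : Prop :=
  ∃ ψ ψinv : E n → E n,
    ContDiff ℝ (⊤ : ℕ∞) ψ ∧ IsOpen (Set.range ψ) ∧ ContDiffOn ℝ (⊤ : ℕ∞) ψinv (Set.range ψ) ∧
    (∀ x : E n, ψinv (ψ x) = x) ∧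
    ∀ (γ : ℝ → E n) (t₁ t₂ : ℝ), IsGeodesic F γ t₁ t₂ →
      ∃ (f : ℝ → ℝ) (a b : E n), a ≠ 0 ∧
        ContDiffOn ℝ 2 f (Set.Ioo t₁ t₂) ∧
        (∀ t ∈ Set.Ioo t₁ t₂, 0 < deriv f t) ∧
        ∀ t ∈ Set.Ioo t₁ t₂, ψ (γ t) = f t • a + b

/-!
Write `[L]_p(z) ∈ V*` for the Euler–Lagrange covector of `L` at the 2-jet with position and velocity
`p = (x, y)` and acceleration `z`. It is affine in `z` with linear part the fibre Hessian of `L`,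
and for a Finsler function that Hessian has kernel `ℝ y`; so if `[F]_p(z) = 0`, then
`[F]_p(z') = 0` exactly when `z - z'` is a multiple of `y`. A curve with nonvanishing velocity runs
along a line, in the positive direction, exactly when its acceleration is a multiple of its
velocity, and `φ ∘ γ` has acceleration `Dφ (γ'' - z')` with `z' = -Dφ⁻¹ D²φ(γ', γ')`. As a geodesic
passes through every point in every direction, `φ` straightens all geodesics if and only if
`[F]_{(x, y)}(-Dφ⁻¹ D²φ(y, y)) = 0` for all `x` and all `y ≠ 0`.

In coordinates this is the PDE system. Its left-hand side is `[F]_{(x, y)}(0)`, by the Euler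
identity for the second sum. On the right, the fibre Hessian of `F̄` at `Dφ y` annihilates `Dφ y`,
which kills the second term in the bracket, and it pulls back under `Dφ` to the fibre Hessian of
`F`, which turns the first term into the Hessian of `F` paired with `Dφ⁻¹ D²φ(y, y)`.
-/

/-! ### Fibre derivatives -/

section FiberCalculus

variable {B V W : Type*} [NormedAddCommGroup B] [NormedSpace ℝ B]
  [NormedAddCommGroup V] [NormedSpace ℝ V] [NormedAddCommGroup W] [NormedSpace ℝ W]

/-- The partial derivative `∂F/∂x` of a function `F(x, y)` in the base variable. -/
def baseDeriv (F : B × V → W) (p : B × V) : B →L[ℝ] W :=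
  fderiv ℝ F p ∘L .inl ℝ B V

/-- The partial derivative `∂F/∂y` of a function `F(x, y)` in the fibre variable. -/
def fiberDeriv (F : B × V → W) (p : B × V) : V →L[ℝ] W :=
  fderiv ℝ F p ∘L .inr ℝ B V

/-- The second partial derivative `∂²F/∂y²` of a function `F(x, y)` in the fibre variable, as a
bilinear map. -/
def fiberHessian (F : B × V → W) (p : B × V) : V →L[ℝ] V →L[ℝ] W :=
  fiberDeriv (fiberDeriv F) p

/-- Positive homogeneity of degree `k` in the fibre variable. -/
def IsFiberHomogeneous (F : B × V → ℝ) (k : ℕ) : Prop :=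
  ∀ (x : B) (y : V) (c : ℝ), 0 < c → F (x, c • y) = c ^ k * F (x, y)

lemma fderiv_prodMk_apply (F : B × V → W) (p : B × V) (a : B) (b : V) :
    fderiv ℝ F p (a, b) = baseDeriv F p a + fiberDeriv F p b := by
  simp [baseDeriv, fiberDeriv, ← map_add]

lemma contDiffAt_fiberDeriv {F : B × V → W} {p : B × V} {m k : WithTop ℕ∞}
    (hF : ContDiffAt ℝ k F p) (hmk : m + 1 ≤ k) : ContDiffAt ℝ m (fiberDeriv F) p :=
  (hF.fderiv_right hmk).clm_comp contDiffAt_const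

lemma differentiableAt_fiberDeriv {F : B × V → W} {p : B × V} (hF : ContDiffAt ℝ 2 F p) :
    DifferentiableAt ℝ (fiberDeriv F) p :=
  (contDiffAt_fiberDeriv hF one_add_one_eq_two.le).differentiableAt one_ne_zero

lemma fderiv_fiberDeriv_apply {F : B × V → W} {p : B × V} (hF : ContDiffAt ℝ 2 F p)
    (w : B × V) (b : V) :
    fderiv ℝ (fiberDeriv F) p w b = fderiv ℝ (fderiv ℝ F) p w (0, b) := by
  have h : DifferentiableAt ℝ (fderiv ℝ F) p :=
    (hF.fderiv_right one_add_one_eq_two.le).differentiableAt one_ne_zero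
  have hd : HasFDerivAt (fiberDeriv F) _ p :=
    h.hasFDerivAt.clm_comp (hasFDerivAt_const (ContinuousLinearMap.inr ℝ B V) p)
  simp [hd.fderiv]

lemma fiberHessian_comm {F : B × V → W} {p : B × V} (hF : ContDiffAt ℝ 2 F p) (a b : V) :
    fiberHessian F p a b = fiberHessian F p b a := by
  change fderiv ℝ (fiberDeriv F) p (0, a) b = fderiv ℝ (fiberDeriv F) p (0, b) a
  rw [fderiv_fiberDeriv_apply hF, fderiv_fiberDeriv_apply hF]
  exact hF.isSymmSndFDerivAt (by simp) _ _

lemma hasFDerivAt_fiber {F : B × V → W} {x : B} {y : V} (hF : DifferentiableAt ℝ F (x, y)) :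
    HasFDerivAt (fun z => F (x, z)) (fiberDeriv F (x, y)) y :=
  hF.hasFDerivAt.comp y (hasFDerivAt_prodMk_right x y)

section LinearChange

variable {B' V' : Type*} [NormedAddCommGroup B'] [NormedSpace ℝ B']
  [NormedAddCommGroup V'] [NormedSpace ℝ V'] {F : B × V → W} {G : B' × V' → W}
  {x : B} {x' : B'} {A : V →L[ℝ] V'} {y : V}

lemma fiberDeriv_eq_comp_of_eventuallyEq (h : ∀ᶠ z in 𝓝 y, G (x', A z) = F (x, z))
    (hF : DifferentiableAt ℝ F (x, y)) (hG : DifferentiableAt ℝ G (x', A y)) :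
    fiberDeriv F (x, y) = fiberDeriv G (x', A y) ∘L A :=
  (hasFDerivAt_fiber hF).unique
    (((hasFDerivAt_fiber hG).comp y A.hasFDerivAt).congr_of_eventuallyEq
      (h.mono fun _ hz => hz.symm))

lemma fiberHessian_apply_of_eventuallyEq (h : ∀ᶠ z in 𝓝 y, G (x', A z) = F (x, z))
    (hF : ContDiffAt ℝ 2 F (x, y)) (hG : ContDiffAt ℝ 2 G (x', A y)) (a b : V) :
    fiberHessian G (x', A y) (A a) (A b) = fiberHessian F (x, y) a b := by
  have hdF : ∀ᶠ z in 𝓝 y, DifferentiableAt ℝ F (x, z) :=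
    (Continuous.prodMk_right x).continuousAt.eventually
      ((hF.eventually (by simp)).mono fun _ hz => hz.differentiableAt two_ne_zero)
  have hdG : ∀ᶠ z in 𝓝 y, DifferentiableAt ℝ G (x', A z) :=
    ((Continuous.prodMk_right x').comp A.continuous).continuousAt.eventually
      ((hG.eventually (by simp)).mono fun _ hz => hz.differentiableAt two_ne_zero)
  have hFG : ∀ᶠ z in 𝓝 y, fiberDeriv F (x, z) = fiberDeriv G (x', A z) ∘L A := by
    filter_upwards [h.eventually_nhds, hdF, hdG] with z hz hzF hzG
    exact fiberDeriv_eq_comp_of_eventuallyEq hz hzF hzG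
  have hG' := ((hasFDerivAt_fiber (differentiableAt_fiberDeriv hG)).comp y A.hasFDerivAt).clm_comp
    (hasFDerivAt_const A y)
  have := (hasFDerivAt_fiber (differentiableAt_fiberDeriv hF)).unique
    (hG'.congr_of_eventuallyEq hFG)
  simp [fiberHessian, this]

end LinearChange

section Homogeneous

variable {F : B × V → ℝ} {k : ℕ} {p : B × V}

lemma IsFiberHomogeneous.fiberDeriv_apply_self (hF : IsFiberHomogeneous F k)
    (hd : DifferentiableAt ℝ F p) : fiberDeriv F p p.2 = k * F p := by
  obtain ⟨x, y⟩ := p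
  have hray : HasDerivAt (fun c : ℝ => c • y) y 1 := by
    simpa using (hasDerivAt_id (1 : ℝ)).smul_const y
  have hcomp := (hasFDerivAt_fiber hd).comp_hasDerivAt_of_eq 1 hray (one_smul ℝ y).symm
  have hpow := (hasDerivAt_pow k (1 : ℝ)).mul_const (F (x, y))
  have := hcomp.unique (hpow.congr_of_eventuallyEq <| by
    filter_upwards [lt_mem_nhds zero_lt_one] with c hc using hF x y c hc)
  simpa using this

lemma IsFiberHomogeneous.fderiv_fiberDeriv_apply_self (hF : IsFiberHomogeneous F k)
    (hd : ContDiffAt ℝ 2 F p) (w : B × V) :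
    fderiv ℝ (fiberDeriv F) p w p.2 = k * fderiv ℝ F p w - fiberDeriv F p w.2 := by
  have heuler : (fun q : B × V => fiberDeriv F q q.2) =ᶠ[𝓝 p] fun q => k * F q :=
    (hd.eventually (by simp)).mono fun q hq =>
      hF.fiberDeriv_apply_self (hq.differentiableAt two_ne_zero)
  have hright := (hd.differentiableAt two_ne_zero).hasFDerivAt.const_mul (k : ℝ)
  have hleft := (differentiableAt_fiberDeriv hd).hasFDerivAt.clm_apply (hasFDerivAt_snd (p := p))
  have := DFunLike.congr_fun (hleft.unique (hright.congr_of_eventuallyEq heuler)) w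
  simp only [add_apply, ContinuousLinearMap.comp_apply, ContinuousLinearMap.coe_snd',
    ContinuousLinearMap.flip_apply, smul_apply, smul_eq_mul] at this
  linarith

lemma IsFiberHomogeneous.fiberHessian_apply_self (hF : IsFiberHomogeneous F 1)
    (hd : ContDiffAt ℝ 2 F p) (a : V) : fiberHessian F p a p.2 = 0 := by
  have := hF.fderiv_fiberDeriv_apply_self hd (0, a)
  simpa [fderiv_prodMk_apply, fiberHessian] using this

end Homogeneous

end FiberCalculus

/-! ### The Euler–Lagrange covector -/

section EulerLagrange

variable {V : Type*} [NormedAddCommGroup V] [NormedSpace ℝ V] {L F : V × V → ℝ} {p : V × V}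
  {z z' : V}

/-- The Euler–Lagrange covector `d/dt (∂L/∂y) - ∂L/∂x` of a Lagrangian `L`, evaluated on the
2-jet `(x, y, z)`, `p = (x, y)`, of a curve: position `x`, velocity `y`, acceleration `z`. -/
def eulerLagrange (L : V × V → ℝ) (p : V × V) (z : V) : V →L[ℝ] ℝ :=
  fderiv ℝ (fiberDeriv L) p (p.2, z) - baseDeriv L p

/-- The energy `½F²`. Its fibre Hessian is the fundamental tensor of `F`. -/
def energy (F : V × V → ℝ) (p : V × V) : ℝ := F p ^ 2 / 2

lemma eulerLagrange_eq_add_fiberHessian (L : V × V → ℝ) (p : V × V) (z z' : V) :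
    eulerLagrange L p z' = eulerLagrange L p z + fiberHessian L p (z' - z) := by
  simp only [eulerLagrange, fderiv_prodMk_apply, map_sub, fiberHessian]
  abel

lemma IsFiberHomogeneous.eulerLagrange_apply_self {k : ℕ} (hL : IsFiberHomogeneous L k)
    (hd : ContDiffAt ℝ 2 L p) (z : V) :
    eulerLagrange L p z p.2 = (k - 1) * fderiv ℝ L p (p.2, z) := by
  rw [eulerLagrange, _root_.sub_apply, hL.fderiv_fiberDeriv_apply_self hd, fderiv_prodMk_apply]
  ring

lemma hasFDerivAt_energy (hF : DifferentiableAt ℝ F p) :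
    HasFDerivAt (energy F) (F p • fderiv ℝ F p) p := by
  have h := (hF.hasFDerivAt.pow 2).mul_const (2⁻¹ : ℝ)
  refine (h.congr_fderiv ?_).congr_of_eventuallyEq (.of_forall fun q => div_eq_mul_inv _ _)
  module

lemma contDiffAt_energy {k : WithTop ℕ∞} (hF : ContDiffAt ℝ k F p) :
    ContDiffAt ℝ k (energy F) p :=
  (hF.pow 2).div_const 2

lemma fiberDeriv_energy (hF : DifferentiableAt ℝ F p) :
    fiberDeriv (energy F) p = F p • fiberDeriv F p := by
  simp [fiberDeriv, (hasFDerivAt_energy hF).fderiv]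

lemma fderiv_fiberDeriv_energy (hF : ContDiffAt ℝ 2 F p) (w : V × V) :
    fderiv ℝ (fiberDeriv (energy F)) p w =
      F p • fderiv ℝ (fiberDeriv F) p w + fderiv ℝ F p w • fiberDeriv F p := by
  have heq : fiberDeriv (energy F) =ᶠ[𝓝 p] fun q => F q • fiberDeriv F q :=
    (hF.eventually (by simp)).mono fun q hq =>
      fiberDeriv_energy (hq.differentiableAt two_ne_zero)
  have h : HasFDerivAt (fun q => F q • fiberDeriv F q) _ p :=
    (hF.differentiableAt two_ne_zero).hasFDerivAt.smul (differentiableAt_fiberDeriv hF).hasFDerivAt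
  simp [heq.fderiv_eq, h.fderiv]

lemma fiberHessian_energy_apply (hF : ContDiffAt ℝ 2 F p) (a b : V) :
    fiberHessian (energy F) p a b =
      F p * fiberHessian F p a b + fiberDeriv F p a * fiberDeriv F p b :=
  DFunLike.congr_fun (fderiv_fiberDeriv_energy hF (0, a)) b

lemma eulerLagrange_energy (hF : ContDiffAt ℝ 2 F p) (z : V) :
    eulerLagrange (energy F) p z =
      F p • eulerLagrange F p z + fderiv ℝ F p (p.2, z) • fiberDeriv F p := by
  have hbase : baseDeriv (energy F) p = F p • baseDeriv F p := by
    simp [baseDeriv, (hasFDerivAt_energy (hF.differentiableAt two_ne_zero)).fderiv]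
  rw [eulerLagrange, eulerLagrange, fderiv_fiberDeriv_energy hF, hbase]
  module

lemma isFiberHomogeneous_energy (hF : IsFiberHomogeneous F 1) :
    IsFiberHomogeneous (energy F) 2 := fun x y c hc => by
  simp only [energy, hF x y c hc]
  ring

lemma IsFiberHomogeneous.eulerLagrange_eq_zero_of_energy (hF : IsFiberHomogeneous F 1)
    (hd : ContDiffAt ℝ 2 F p) (hp : F p ≠ 0) (hz : eulerLagrange (energy F) p z = 0) :
    fderiv ℝ F p (p.2, z) = 0 ∧ eulerLagrange F p z = 0 := by
  have hspeed : fderiv ℝ F p (p.2, z) = 0 := by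
    have h := (isFiberHomogeneous_energy hF).eulerLagrange_apply_self (contDiffAt_energy hd) z
    rw [hz, (hasFDerivAt_energy (hd.differentiableAt two_ne_zero)).fderiv] at h
    norm_num at h
    exact h.resolve_left hp
  rw [eulerLagrange_energy hd, hspeed, zero_smul, add_zero] at hz
  exact ⟨hspeed, (smul_eq_zero.1 hz).resolve_left hp⟩

end EulerLagrange

/-! ### Finsler metrics and their spray -/

section FinslerMetric

variable {V : Type*} [NormedAddCommGroup V] [NormedSpace ℝ V]

/-- Coordinate-free form of `IsFinsler`, for a function on the tangent bundle `V × V` of a normed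
space: the matrix condition becomes positivity of the fundamental tensor, the fibre Hessian of
`½F²`. -/
structure IsFinslerMetric (F : V × V → ℝ) : Prop where
  contDiffAt : ∀ p : V × V, p.2 ≠ 0 → ContDiffAt ℝ (⊤ : ℕ∞) F p
  homogeneous : IsFiberHomogeneous F 1
  pos : ∀ p : V × V, p.2 ≠ 0 → 0 < F p
  fiberHessian_energy_pos : ∀ p : V × V, p.2 ≠ 0 → ∀ v : V, v ≠ 0 →
    0 < fiberHessian (energy F) p v v

/-- The second-order field `p = (x, y) ↦ z` of the Euler–Lagrange equations of `½F²`, solved for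
the acceleration `z`. `ContinuousLinearMap.inverse` is `0` on non-invertible maps, so this is
meaningful only where the fundamental tensor is nondegenerate. -/
def geodesicSpray (F : V × V → ℝ) (p : V × V) : V :=
  -(fiberHessian (energy F) p).inverse (eulerLagrange (energy F) p 0)

lemma isInvertible_of_apply_self_ne_zero [FiniteDimensional ℝ V] {T : V →L[ℝ] V →L[ℝ] ℝ}
    (hT : ∀ v, v ≠ 0 → T v v ≠ 0) : T.IsInvertible := by
  have hinj : Function.Injective T.toLinearMap := by
    refine (injective_iff_map_eq_zero _).2 fun v hv => by_contra fun hne => hT v hne ?_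
    exact DFunLike.congr_fun (show T v = 0 from hv) v
  have hrank : Module.finrank ℝ V = Module.finrank ℝ (V →L[ℝ] ℝ) :=
    (Subspace.dual_finrank_eq (K := ℝ) (V := V)).symm.trans
      LinearMap.toContinuousLinearMap.finrank_eq
  exact ⟨(LinearEquiv.ofInjectiveOfFinrankEq _ hinj hrank).toContinuousLinearEquiv, by ext; rfl⟩

namespace IsFinslerMetric

variable {F : V × V → ℝ} {p : V × V}

lemma contDiffAt_two (hF : IsFinslerMetric F) (hp : p.2 ≠ 0) : ContDiffAt ℝ 2 F p :=
  contDiffAt_infty.1 (hF.contDiffAt p hp) 2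

lemma fiberHessian_eq_zero_iff (hF : IsFinslerMetric F) (hp : p.2 ≠ 0) (v : V) :
    fiberHessian F p v = 0 ↔ ∃ c : ℝ, v = c • p.2 := by
  have hd := hF.contDiffAt_two hp
  have hself : fiberHessian F p p.2 = 0 := by
    ext a
    rw [fiberHessian_comm hd, hF.homogeneous.fiberHessian_apply_self hd, _root_.zero_apply]
  constructor
  · intro hv
    -- Remove from `v` its component along `y`; the fundamental tensor vanishes on the remainder.
    refine ⟨fiberDeriv F p v / F p, by_contra fun hne => ?_⟩
    have hpos := hF.fiberHessian_energy_pos p hp _ (sub_ne_zero.2 hne)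
    have hdir : fiberDeriv F p (v - (fiberDeriv F p v / F p) • p.2) = 0 := by
      rw [map_sub, map_smul, hF.homogeneous.fiberDeriv_apply_self (hd.differentiableAt two_ne_zero)]
      have := (hF.pos p hp).ne'
      simp [this]
    rw [fiberHessian_energy_apply hd, hdir] at hpos
    simp [hv, hself] at hpos
  · rintro ⟨c, rfl⟩
    rw [map_smul, hself, smul_zero]

lemma eulerLagrange_eq_zero_iff (hF : IsFinslerMetric F) (hp : p.2 ≠ 0) {z : V}
    (hz : eulerLagrange F p z = 0) (z' : V) :
    eulerLagrange F p z' = 0 ↔ ∃ c : ℝ, z - z' = c • p.2 := by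
  rw [eulerLagrange_eq_add_fiberHessian F p z' z] at hz
  rw [← hF.fiberHessian_eq_zero_iff hp, eq_neg_of_add_eq_zero_left hz, neg_eq_zero]

variable [FiniteDimensional ℝ V]

lemma isInvertible_fiberHessian_energy (hF : IsFinslerMetric F) (hp : p.2 ≠ 0) :
    (fiberHessian (energy F) p).IsInvertible :=
  isInvertible_of_apply_self_ne_zero fun v hv => (hF.fiberHessian_energy_pos p hp v hv).ne'

lemma eulerLagrange_energy_geodesicSpray (hF : IsFinslerMetric F) (hp : p.2 ≠ 0) :
    eulerLagrange (energy F) p (geodesicSpray F p) = 0 := by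
  rw [eulerLagrange_eq_add_fiberHessian _ p 0, sub_zero, geodesicSpray, map_neg,
    (hF.isInvertible_fiberHessian_energy hp).self_apply_inverse, add_neg_cancel]

lemma contDiffAt_geodesicSpray (hF : IsFinslerMetric F) (hp : p.2 ≠ 0) :
    ContDiffAt ℝ 1 (geodesicSpray F) p := by
  have hE : ContDiffAt ℝ 3 (energy F) p :=
    contDiffAt_energy (contDiffAt_infty.1 (hF.contDiffAt p hp) 3)
  have hEy : ContDiffAt ℝ 2 (fiberDeriv (energy F)) p := contDiffAt_fiberDeriv hE (by norm_num)
  have hEyy : ContDiffAt ℝ 1 (fiberHessian (energy F)) p := contDiffAt_fiberDeriv hEy (by norm_num)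
  have hEx : ContDiffAt ℝ 1 (baseDeriv (energy F)) p :=
    (hE.fderiv_right (m := 1) (by norm_num)).clm_comp contDiffAt_const
  have hEL : ContDiffAt ℝ 1 (fun q => eulerLagrange (energy F) q 0) p :=
    ((hEy.fderiv_right (by norm_num)).clm_apply (contDiffAt_snd.prodMk contDiffAt_const)).sub hEx
  exact (((hF.isInvertible_fiberHessian_energy hp).contDiffAt_map_inverse.comp p hEyy).clm_apply
    hEL).neg

end IsFinslerMetric

end FinslerMetric

/-! ### Curves -/

section Curves

variable {V : Type*} [NormedAddCommGroup V] [NormedSpace ℝ V] {u : ℝ → V} {s : Set ℝ} {t : ℝ}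

/-- The curve `u` traces a straight line on `s`, as an orientation-preserving `C²`
reparametrization of an affine line. -/
def IsStraightOn (u : ℝ → V) (s : Set ℝ) : Prop :=
  ∃ (f : ℝ → ℝ) (a b : V), a ≠ 0 ∧ ContDiffOn ℝ 2 f s ∧ (∀ t ∈ s, 0 < deriv f t) ∧
    ∀ t ∈ s, u t = f t • a + b

lemma hasDerivAt_of_contDiffOn_two (hu : ContDiffOn ℝ 2 u s) (hs : IsOpen s) (ht : t ∈ s) :
    HasDerivAt u (deriv u t) t :=
  (hu.differentiableOn two_ne_zero).hasDerivAt (hs.mem_nhds ht)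

lemma hasDerivAt_deriv_of_contDiffOn_two (hu : ContDiffOn ℝ 2 u s) (hs : IsOpen s)
    (ht : t ∈ s) : HasDerivAt (deriv u) (deriv (deriv u) t) t :=
  ((hu.deriv_of_isOpen hs one_add_one_eq_two.le).differentiableOn one_ne_zero).hasDerivAt
    (hs.mem_nhds ht)

lemma contDiffOn_succ_of_hasDerivAt {v : ℝ → V} {k : ℕ} (hs : IsOpen s)
    (hu : ∀ t ∈ s, HasDerivAt u (v t) t) (hv : ContDiffOn ℝ k v s) :
    ContDiffOn ℝ (k + 1) u s :=
  (contDiffOn_succ_iff_deriv_of_isOpen hs).2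
    ⟨fun t ht => (hu t ht).differentiableAt.differentiableWithinAt, by simp,
      hv.congr fun t ht => (hu t ht).deriv⟩

lemma IsStraightOn.exists_deriv_deriv_eq_smul (hu : IsStraightOn u s) (hs : IsOpen s)
    (ht : t ∈ s) : ∃ c : ℝ, deriv (deriv u) t = c • deriv u t := by
  obtain ⟨f, a, b, -, hf, hfpos, hufab⟩ := hu
  have hvel : ∀ τ ∈ s, deriv u τ = deriv f τ • a := fun τ hτ =>
    ((((hasDerivAt_of_contDiffOn_two hf hs hτ).smul_const a).add_const b).congr_of_eventuallyEq
      (Filter.eventually_of_mem (hs.mem_nhds hτ) hufab)).deriv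
  have hacc : deriv (deriv u) t = deriv (deriv f) t • a :=
    (((hasDerivAt_deriv_of_contDiffOn_two hf hs ht).smul_const a).congr_of_eventuallyEq
      (Filter.eventually_of_mem (hs.mem_nhds ht) hvel)).deriv
  refine ⟨deriv (deriv f) t / deriv f t, ?_⟩
  rw [hacc, hvel t ht, smul_smul, div_mul_cancel₀ _ (hfpos t ht).ne']

lemma isStraightOn_of_deriv_eq_smul {g : ℝ → ℝ} {a : V} (hs : IsOpen s) (hs' : IsPreconnected s)
    (hu : ContDiffOn ℝ 2 u s) (ha : a ≠ 0) (hg : ∀ t ∈ s, 0 < g t)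
    (hug : ∀ t ∈ s, deriv u t = g t • a) : IsStraightOn u s := by
  obtain ⟨ℓ, hℓ⟩ := SeparatingDual.exists_eq_one (R := ℝ) ha
  have hvel : ∀ t ∈ s, HasDerivAt u (g t • a) t := fun t ht =>
    hug t ht ▸ hasDerivAt_of_contDiffOn_two hu hs ht
  have hf : ∀ t ∈ s, HasDerivAt (fun τ => ℓ (u τ)) (g t) t := fun t ht => by
    refine (ℓ.hasFDerivAt.comp_hasDerivAt t (hvel t ht)).congr_deriv ?_
    rw [map_smul, hℓ, smul_eq_mul, mul_one]
  have hrest : ∀ t ∈ s, HasDerivAt (fun τ => u τ - ℓ (u τ) • a) 0 t := fun t ht => by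
    simpa using (hvel t ht).fun_sub ((hf t ht).smul_const a)
  obtain ⟨b, hb⟩ := hs.exists_is_const_of_deriv_eq_zero hs'
    (fun t ht => (hrest t ht).differentiableAt.differentiableWithinAt)
    (fun t ht => (hrest t ht).deriv)
  refine ⟨fun τ => ℓ (u τ), a, b, ha, ℓ.contDiff.comp_contDiffOn hu, fun t ht => ?_,
    fun t ht => ?_⟩
  · rw [(hf t ht).deriv]
    exact hg t ht
  · rw [← hb t ht, add_sub_cancel]

/-- A Euclidean norm `N` of `v` satisfies the same equation `N' = cN`, so `N⁻¹v` is constant. -/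
lemma exists_eq_smul_of_hasDerivAt_smul_self [FiniteDimensional ℝ V] {v : ℝ → V} {c : ℝ → ℝ}
    (hs : IsOpen s) (hs' : IsPreconnected s) (hne : s.Nonempty) (hv0 : ∀ t ∈ s, v t ≠ 0)
    (hv : ∀ t ∈ s, HasDerivAt v (c t • v t) t) :
    ∃ a : V, a ≠ 0 ∧ ∃ g : ℝ → ℝ, ∀ t ∈ s, 0 < g t ∧ v t = g t • a := by
  let N : ℝ → ℝ := fun t => ‖toEuclidean (v t)‖
  have hN0 : ∀ t ∈ s, 0 < N t := fun t ht => by simpa [N] using hv0 t ht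
  have hN : ∀ t ∈ s, HasDerivAt N (c t * N t) t := fun t ht => by
    have h := (((toEuclidean (E := V)).hasFDerivAt.comp_hasDerivAt t (hv t ht)).norm_sq).sqrt
      (pow_ne_zero 2 (hN0 t ht).ne')
    simp only [Function.comp_apply, Real.sqrt_sq (norm_nonneg _)] at h
    refine h.congr_deriv ?_
    have := (hN0 t ht).ne'
    simp only [N] at this ⊢
    simp only [map_smul, ContinuousLinearEquiv.coe_coe, inner_smul_right,
      inner_self_eq_norm_sq_to_K, Real.ringHom_apply]
    field_simp
  have hconst : ∀ t ∈ s, HasDerivAt (fun τ => (N τ)⁻¹ • v τ) 0 t := fun t ht => by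
    refine (((hN t ht).inv (hN0 t ht).ne').smul (hv t ht)).congr_deriv ?_
    have := (hN0 t ht).ne'
    match_scalars
    simp only [Pi.inv_apply]
    field_simp
    ring
  obtain ⟨a, ha⟩ := hs.exists_is_const_of_deriv_eq_zero hs'
    (fun t ht => (hconst t ht).differentiableAt.differentiableWithinAt)
    (fun t ht => (hconst t ht).deriv)
  obtain ⟨t₀, ht₀⟩ := hne
  refine ⟨a, ?_, N, fun t ht => ⟨hN0 t ht, ?_⟩⟩
  · rw [← ha t₀ ht₀]
    exact smul_ne_zero (inv_ne_zero (hN0 t₀ ht₀).ne') (hv0 t₀ ht₀)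
  · rw [← ha t ht, smul_inv_smul₀ (hN0 t ht).ne']

lemma isStraightOn_iff_exists_deriv_deriv_eq_smul [FiniteDimensional ℝ V] (hs : IsOpen s)
    (hs' : IsPreconnected s) (hne : s.Nonempty) (hu : ContDiffOn ℝ 2 u s)
    (hu0 : ∀ t ∈ s, deriv u t ≠ 0) :
    IsStraightOn u s ↔ ∀ t ∈ s, ∃ c : ℝ, deriv (deriv u) t = c • deriv u t := by
  refine ⟨fun h t ht => h.exists_deriv_deriv_eq_smul hs ht, fun h => ?_⟩
  choose! c hc using h
  obtain ⟨a, ha, g, hg⟩ := exists_eq_smul_of_hasDerivAt_smul_self hs hs' hne hu0 fun t ht =>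
    hc t ht ▸ hasDerivAt_deriv_of_contDiffOn_two hu hs ht
  exact isStraightOn_of_deriv_eq_smul hs hs' hu ha (fun t ht => (hg t ht).1)
    fun t ht => (hg t ht).2

lemma exists_hasDerivAt_mem_of_contDiffAt [CompleteSpace V] {X : V → V} {x : V} {U : Set V}
    (hX : ContDiffAt ℝ 1 X x) (hU : U ∈ 𝓝 x) :
    ∃ ε > 0, ∃ α : ℝ → V, α 0 = x ∧
      ∀ t ∈ Set.Ioo (-ε) ε, α t ∈ U ∧ HasDerivAt α (X (α t)) t := by
  obtain ⟨α, hα0, δ, hδ, hα⟩ :=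
    hX.exists_forall_mem_closedBall_exists_eq_forall_mem_Ioo_hasDerivAt₀ 0
  rw [zero_sub, zero_add] at hα
  have hcont : ContinuousAt α 0 := (hα 0 ⟨neg_lt_zero.2 hδ, hδ⟩).continuousAt
  obtain ⟨η, hη, hηU⟩ := Metric.mem_nhds_iff.1 (hcont.preimage_mem_nhds (hα0 ▸ hU))
  refine ⟨min δ η, lt_min hδ hη, α, hα0, fun t ht => ⟨hηU ?_, hα t ?_⟩⟩
  · rw [mem_ball_zero_iff, Real.norm_eq_abs, abs_lt]
    exact ⟨(neg_le_neg (min_le_right _ _)).trans_lt ht.1, ht.2.trans_le (min_le_right _ _)⟩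
  · exact ⟨(neg_le_neg (min_le_left _ _)).trans_lt ht.1, ht.2.trans_le (min_le_left _ _)⟩

lemma exists_curve_of_secondOrder [CompleteSpace V] {Z : V × V → V} {U : Set (V × V)}
    (hU : IsOpen U) (hZ : ∀ p ∈ U, ContDiffAt ℝ 1 Z p) {x y : V} (hxy : (x, y) ∈ U) :
    ∃ ε > 0, ∃ γ : ℝ → V, γ 0 = x ∧ deriv γ 0 = y ∧ ContDiffOn ℝ 2 γ (Set.Ioo (-ε) ε) ∧
      ∀ t ∈ Set.Ioo (-ε) ε,
        (γ t, deriv γ t) ∈ U ∧ deriv (deriv γ) t = Z (γ t, deriv γ t) := by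
  obtain ⟨ε, hε, α, hα0, hα⟩ := exists_hasDerivAt_mem_of_contDiffAt
    (X := fun p => (p.2, Z p)) (contDiffAt_snd.prodMk (hZ _ hxy)) (hU.mem_nhds hxy)
  have hpos : ∀ t ∈ Set.Ioo (-ε) ε, HasDerivAt (fun τ => (α τ).1) (α t).2 t := fun t ht =>
    (hasFDerivAt_fst (p := α t)).comp_hasDerivAt t (hα t ht).2
  have hvel : ∀ t ∈ Set.Ioo (-ε) ε, HasDerivAt (fun τ => (α τ).2) (Z (α t)) t := fun t ht =>
    (hasFDerivAt_snd (p := α t)).comp_hasDerivAt t (hα t ht).2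
  have hcurve : ∀ t ∈ Set.Ioo (-ε) ε, deriv (fun τ => (α τ).1) t = (α t).2 := fun t ht =>
    (hpos t ht).deriv
  refine ⟨ε, hε, fun t => (α t).1, by simp [hα0], ?_, ?_, fun t ht => ?_⟩
  · rw [hcurve 0 ⟨neg_lt_zero.2 hε, hε⟩, hα0]
  · have hacc : ContDiffOn ℝ (0 : ℕ) (fun t => Z (α t)) (Set.Ioo (-ε) ε) :=
      contDiffOn_zero.2 fun t ht =>
        ((hZ _ (hα t ht).1).continuousAt.comp (hα t ht).2.continuousAt).continuousWithinAt
    simpa [one_add_one_eq_two] using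
      contDiffOn_succ_of_hasDerivAt (k := 1) isOpen_Ioo hpos
        (by simpa using contDiffOn_succ_of_hasDerivAt isOpen_Ioo hvel hacc)
  · rw [hcurve t ht]
    exact ⟨(hα t ht).1, ((hvel t ht).congr_of_eventuallyEq
      (Filter.eventually_of_mem (isOpen_Ioo.mem_nhds ht) hcurve)).deriv⟩

end Curves

/-! ### Straightening geodesics -/

section Straightening

variable {V W : Type*} [NormedAddCommGroup V] [NormedSpace ℝ V]
  [NormedAddCommGroup W] [NormedSpace ℝ W]

/-- Coordinate-free form of `IsGeodesic`, on an arbitrary set of times. -/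
structure IsGeodesicOn (F : V × V → ℝ) (γ : ℝ → V) (s : Set ℝ) : Prop where
  contDiffOn : ContDiffOn ℝ 2 γ s
  deriv_ne_zero : ∀ t ∈ s, deriv γ t ≠ 0
  constSpeed : ∃ c : ℝ, 0 < c ∧ ∀ t ∈ s, F (γ t, deriv γ t) = c
  eulerLagrange_eq_zero : ∀ t ∈ s, eulerLagrange F (γ t, deriv γ t) (deriv (deriv γ) t) = 0

/-- The acceleration at `x` of a curve with velocity `y` that `φ` maps to an affinely parametrized
line; the inverse is meaningful only where `fderiv ℝ φ x` is invertible. -/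
def lineAccel (φ : V → W) (x y : V) : V :=
  -(fderiv ℝ φ x).inverse (fderiv ℝ (fderiv ℝ φ) x y y)

lemma IsFinslerMetric.exists_isGeodesicOn [FiniteDimensional ℝ V] {F : V × V → ℝ}
    (hF : IsFinslerMetric F) (x : V) {y : V} (hy : y ≠ 0) :
    ∃ ε > 0, ∃ γ : ℝ → V, γ 0 = x ∧ deriv γ 0 = y ∧ IsGeodesicOn F γ (Set.Ioo (-ε) ε) := by
  have hU : IsOpen {p : V × V | p.2 ≠ 0} := isOpen_ne_fun continuous_snd continuous_const
  obtain ⟨ε, hε, γ, hγ0, hγ0', hγ, hspray⟩ :=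
    exists_curve_of_secondOrder hU (fun p hp => hF.contDiffAt_geodesicSpray hp)
      (show (x, y) ∈ {p : V × V | p.2 ≠ 0} from hy)
  have hEL : ∀ t ∈ Set.Ioo (-ε) ε,
      fderiv ℝ F (γ t, deriv γ t) (deriv γ t, deriv (deriv γ) t) = 0 ∧
        eulerLagrange F (γ t, deriv γ t) (deriv (deriv γ) t) = 0 := fun t ht => by
    have hv := (hspray t ht).1
    refine hF.homogeneous.eulerLagrange_eq_zero_of_energy (hF.contDiffAt_two hv)
      (hF.pos _ hv).ne' ?_
    rw [(hspray t ht).2, hF.eulerLagrange_energy_geodesicSpray hv]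
  have hspeed : ∀ t ∈ Set.Ioo (-ε) ε, HasDerivAt (fun τ => F (γ τ, deriv γ τ)) 0 t := fun t ht => by
    have hjet := (hasDerivAt_of_contDiffOn_two hγ isOpen_Ioo ht).prodMk
      (hasDerivAt_deriv_of_contDiffOn_two hγ isOpen_Ioo ht)
    have hFd := (hF.contDiffAt_two (hspray t ht).1).differentiableAt two_ne_zero
    exact (hFd.hasFDerivAt.comp_hasDerivAt t hjet).congr_deriv (hEL t ht).1
  refine ⟨ε, hε, γ, hγ0, hγ0', hγ, fun t ht => (hspray t ht).1, ⟨F (x, y), hF.pos _ hy, ?_⟩,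
    fun t ht => (hEL t ht).2⟩
  intro t ht
  have hzero : (0 : ℝ) ∈ Set.Ioo (-ε) ε := ⟨neg_lt_zero.2 hε, hε⟩
  have := isOpen_Ioo.is_const_of_deriv_eq_zero isPreconnected_Ioo
    (fun τ hτ => (hspeed τ hτ).differentiableAt.differentiableWithinAt)
    (fun τ hτ => (hspeed τ hτ).deriv) ht hzero
  simpa only [hγ0, hγ0'] using this

section Composition

variable {φ : V → W} {γ : ℝ → V} {s : Set ℝ} {t : ℝ}

lemma deriv_comp_of_contDiffOn_two (hφ : Differentiable ℝ φ) (hγ : ContDiffOn ℝ 2 γ s)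
    (hs : IsOpen s) (ht : t ∈ s) : deriv (φ ∘ γ) t = fderiv ℝ φ (γ t) (deriv γ t) :=
  ((hφ (γ t)).hasFDerivAt.comp_hasDerivAt t (hasDerivAt_of_contDiffOn_two hγ hs ht)).deriv

lemma deriv_deriv_comp (hφ : ContDiff ℝ 2 φ) (hinv : ∀ x, (fderiv ℝ φ x).IsInvertible)
    (hγ : ContDiffOn ℝ 2 γ s) (hs : IsOpen s) (ht : t ∈ s) :
    deriv (deriv (φ ∘ γ)) t =
      fderiv ℝ φ (γ t) (deriv (deriv γ) t - lineAccel φ (γ t) (deriv γ t)) := by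
  have hvel : deriv (φ ∘ γ) =ᶠ[𝓝 t] fun τ => fderiv ℝ φ (γ τ) (deriv γ τ) :=
    Filter.eventually_of_mem (hs.mem_nhds ht) fun τ hτ =>
      deriv_comp_of_contDiffOn_two (hφ.differentiable two_ne_zero) hγ hs hτ
  have hφ' : DifferentiableAt ℝ (fderiv ℝ φ) (γ t) :=
    (hφ.fderiv_right one_add_one_eq_two.le).differentiable one_ne_zero (γ t)
  have hacc := (hφ'.hasFDerivAt.comp_hasDerivAt t (hasDerivAt_of_contDiffOn_two hγ hs ht)).clm_apply
    (hasDerivAt_deriv_of_contDiffOn_two hγ hs ht)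
  rw [hvel.deriv_eq, lineAccel, sub_neg_eq_add, map_add, (hinv _).self_apply_inverse, add_comm]
  exact hacc.deriv

variable [FiniteDimensional ℝ W] {F : V × V → ℝ}

lemma IsGeodesicOn.isStraightOn_comp_iff (hF : IsFinslerMetric F) (hφ : ContDiff ℝ 2 φ)
    (hinv : ∀ x, (fderiv ℝ φ x).IsInvertible) (hγ : IsGeodesicOn F γ s) (hs : IsOpen s)
    (hs' : IsPreconnected s) (hne : s.Nonempty) :
    IsStraightOn (φ ∘ γ) s ↔
      ∀ t ∈ s, eulerLagrange F (γ t, deriv γ t) (lineAccel φ (γ t) (deriv γ t)) = 0 := by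
  have hinj : ∀ t, Function.Injective (fderiv ℝ φ (γ t)) := fun t => (hinv (γ t)).injective
  have hvel : ∀ t ∈ s, deriv (φ ∘ γ) t = fderiv ℝ φ (γ t) (deriv γ t) := fun t ht =>
    deriv_comp_of_contDiffOn_two (hφ.differentiable two_ne_zero) hγ.contDiffOn hs ht
  have hvel0 : ∀ t ∈ s, deriv (φ ∘ γ) t ≠ 0 := fun t ht => by
    rw [hvel t ht]
    exact (map_ne_zero_iff _ (hinj t)).2 (hγ.deriv_ne_zero t ht)
  rw [isStraightOn_iff_exists_deriv_deriv_eq_smul hs hs' hne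
    (hφ.comp_contDiffOn hγ.contDiffOn) hvel0]
  refine forall₂_congr fun t ht => ?_
  rw [hF.eulerLagrange_eq_zero_iff (hγ.deriv_ne_zero t ht) (hγ.eulerLagrange_eq_zero t ht),
    deriv_deriv_comp hφ hinv hγ.contDiffOn hs ht, hvel t ht]
  simp only [← map_smul, (hinj t).eq_iff]

lemma forall_isStraightOn_comp_iff [FiniteDimensional ℝ V] (hF : IsFinslerMetric F)
    (hφ : ContDiff ℝ 2 φ) (hinv : ∀ x, (fderiv ℝ φ x).IsInvertible) :
    (∀ (γ : ℝ → V) (t₁ t₂ : ℝ), t₁ < t₂ → IsGeodesicOn F γ (Set.Ioo t₁ t₂) →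
      IsStraightOn (φ ∘ γ) (Set.Ioo t₁ t₂)) ↔
    ∀ x y : V, y ≠ 0 → eulerLagrange F (x, y) (lineAccel φ x y) = 0 := by
  constructor
  · intro h x y hy
    obtain ⟨ε, hε, γ, rfl, rfl, hγ⟩ := hF.exists_isGeodesicOn x hy
    have hzero : (0 : ℝ) ∈ Set.Ioo (-ε) ε := ⟨neg_lt_zero.2 hε, hε⟩
    exact (hγ.isStraightOn_comp_iff hF hφ hinv isOpen_Ioo isPreconnected_Ioo ⟨0, hzero⟩).1
      (h γ _ _ (neg_lt_self hε) hγ) 0 hzero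
  · intro h γ t₁ t₂ hlt hγ
    exact (hγ.isStraightOn_comp_iff hF hφ hinv isOpen_Ioo isPreconnected_Ioo
      (Set.nonempty_Ioo.2 hlt)).2 fun t ht => h _ _ (hγ.deriv_ne_zero t ht)

end Composition

end Straightening

/-! ### Diffeomorphisms onto open sets -/

section Diffeomorphisms

variable {V W : Type*} [NormedAddCommGroup V] [NormedSpace ℝ V]
  [NormedAddCommGroup W] [NormedSpace ℝ W] {φ : V → W} {φinv : W → V}

/-- `φ` is a smooth diffeomorphism onto its range, an open set, with inverse `φinv` there. -/
structure IsDiffeoOntoRange (φ : V → W) (φinv : W → V) : Prop where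
  contDiff : ContDiff ℝ (⊤ : ℕ∞) φ
  isOpen_range : IsOpen (Set.range φ)
  contDiffOn_inv : ContDiffOn ℝ (⊤ : ℕ∞) φinv (Set.range φ)
  left_inv : ∀ x, φinv (φ x) = x

/-- The expression `F̄` of `F` in the `φ`-coordinates, where `φinv` is the inverse of `φ`. -/
def expressionInCoords (φinv : W → V) (F : V × V → ℝ) (p : W × W) : ℝ :=
  F (φinv p.1, fderiv ℝ φinv p.1 p.2)

namespace IsDiffeoOntoRange

lemma hasFDerivAt_inv (hφ : IsDiffeoOntoRange φ φinv) (x : V) :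
    HasFDerivAt φinv (fderiv ℝ φinv (φ x)) (φ x) :=
  ((hφ.contDiffOn_inv.contDiffAt (hφ.isOpen_range.mem_nhds ⟨x, rfl⟩)).differentiableAt
    (by simp)).hasFDerivAt

lemma hasFDerivAt (hφ : IsDiffeoOntoRange φ φinv) (x : V) : HasFDerivAt φ (fderiv ℝ φ x) x :=
  (hφ.contDiff.differentiable (by simp) x).hasFDerivAt

lemma fderiv_inv_fderiv_apply (hφ : IsDiffeoOntoRange φ φinv) (x y : V) :
    fderiv ℝ φinv (φ x) (fderiv ℝ φ x y) = y :=
  DFunLike.congr_fun (((hφ.hasFDerivAt_inv x).comp x (hφ.hasFDerivAt x)).unique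
    ((hasFDerivAt_id x).congr_of_eventuallyEq (.of_forall hφ.left_inv))) y

lemma fderiv_fderiv_inv_apply (hφ : IsDiffeoOntoRange φ φinv) (x : V) (Y : W) :
    fderiv ℝ φ x (fderiv ℝ φinv (φ x) Y) = Y := by
  have hright : φ ∘ φinv =ᶠ[𝓝 (φ x)] id := by
    filter_upwards [hφ.isOpen_range.mem_nhds ⟨x, rfl⟩]
    rintro _ ⟨x', rfl⟩
    exact congrArg φ (hφ.left_inv x')
  have hφx : HasFDerivAt φ (fderiv ℝ φ x) (φinv (φ x)) := by
    simpa only [hφ.left_inv] using hφ.hasFDerivAt x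
  exact DFunLike.congr_fun ((hφx.comp (φ x) (hφ.hasFDerivAt_inv x)).unique
    ((hasFDerivAt_id (φ x)).congr_of_eventuallyEq hright)) Y

lemma isInvertible_fderiv (hφ : IsDiffeoOntoRange φ φinv) (x : V) :
    (fderiv ℝ φ x).IsInvertible :=
  .of_inverse (ContinuousLinearMap.ext (hφ.fderiv_fderiv_inv_apply x))
    (ContinuousLinearMap.ext (hφ.fderiv_inv_fderiv_apply x))

lemma fderiv_apply_ne_zero (hφ : IsDiffeoOntoRange φ φinv) (x : V) {y : V} (hy : y ≠ 0) :
    fderiv ℝ φ x y ≠ 0 :=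
  (map_ne_zero_iff _ (hφ.isInvertible_fderiv x).injective).2 hy

lemma expressionInCoords_apply (hφ : IsDiffeoOntoRange φ φinv) (F : V × V → ℝ) (x y : V) :
    expressionInCoords φinv F (φ x, fderiv ℝ φ x y) = F (x, y) := by
  simp only [expressionInCoords, hφ.left_inv, hφ.fderiv_inv_fderiv_apply]

lemma contDiffOn_expressionInCoords (hφ : IsDiffeoOntoRange φ φinv) {F : V × V → ℝ}
    (hF : ContDiffOn ℝ (⊤ : ℕ∞) F {p | p.2 ≠ 0}) :
    ContDiffOn ℝ (⊤ : ℕ∞) (expressionInCoords φinv F) {p | p.1 ∈ Set.range φ ∧ p.2 ≠ 0} := by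
  have hmaps : Set.MapsTo (Prod.fst : W × W → W) {p | p.1 ∈ Set.range φ ∧ p.2 ≠ 0}
      (Set.range φ) := fun p hp => hp.1
  refine hF.comp ((hφ.contDiffOn_inv.comp contDiffOn_fst hmaps).prodMk
    (((hφ.contDiffOn_inv.fderiv_of_isOpen hφ.isOpen_range (by simp)).comp contDiffOn_fst
      hmaps).clm_apply contDiffOn_snd)) ?_
  rintro ⟨_, Y⟩ ⟨⟨x, rfl⟩, hY⟩ (hzero : fderiv ℝ φinv (φ x) Y = 0)
  refine hY (?_ : Y = 0)
  rw [← hφ.fderiv_fderiv_inv_apply x Y, hzero, map_zero]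

lemma contDiffAt_of_contDiffOn (hφ : IsDiffeoOntoRange φ φinv) {Fb : W × W → ℝ}
    (hFb : ContDiffOn ℝ (⊤ : ℕ∞) Fb {p | p.1 ∈ Set.range φ ∧ p.2 ≠ 0}) (x : V) {y : V}
    (hy : y ≠ 0) : ContDiffAt ℝ (⊤ : ℕ∞) Fb (φ x, fderiv ℝ φ x y) :=
  hFb.contDiffAt (((hφ.isOpen_range.preimage continuous_fst).inter
    (isOpen_ne_fun continuous_snd continuous_const)).mem_nhds
      ⟨⟨x, rfl⟩, hφ.fderiv_apply_ne_zero x hy⟩)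

end IsDiffeoOntoRange

end Diffeomorphisms

/-! ### Coordinates -/

section PiSums

variable {ι : Type*} [DecidableEq ι] {W : Type*} [AddCommGroup W] [Module ℝ W]
  [TopologicalSpace W]

lemma clm_pi_ext_iff [Finite ι] {S T : (ι → ℝ) →L[ℝ] W} :
    S = T ↔ ∀ i, S (Pi.single i 1) = T (Pi.single i 1) :=
  ⟨fun h _ => h ▸ rfl, fun h => ContinuousLinearMap.coe_injective <|
    LinearMap.pi_ext' fun i => LinearMap.ext_ring (h i)⟩

variable [Fintype ι]

lemma sum_smul_apply_single (T : (ι → ℝ) →L[ℝ] W) (v : ι → ℝ) :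
    ∑ s, v s • T (Pi.single s 1) = T v := by
  simp only [← map_smul, ← map_sum, ← Pi.single_smul, smul_eq_mul, mul_one,
    Finset.univ_sum_single]

lemma sum_sum_apply_single_single (T : (ι → ℝ) →L[ℝ] (ι → ℝ) →L[ℝ] ℝ) (u v : ι → ℝ) :
    ∑ s, ∑ k, T (Pi.single s 1) (Pi.single k 1) * (u s * v k) = T u v := by
  rw [← sum_smul_apply_single T u, sum_apply]
  refine Finset.sum_congr rfl fun s _ => ?_
  rw [smul_apply, ← sum_smul_apply_single _ v, Finset.smul_sum]
  exact Finset.sum_congr rfl fun k _ => by simp only [smul_eq_mul]; ring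

end PiSums

section Coordinates

variable {n : ℕ} {F : E n × E n → ℝ} {p : E n × E n}

lemma fderiv_pdy (hF : ContDiffAt ℝ 2 F p) (j : Fin n) (w : E n × E n) :
    fderiv ℝ (pdy j F) p w = fderiv ℝ (fiberDeriv F) p w (Pi.single j 1) :=
  DFunLike.congr_fun ((differentiableAt_fiberDeriv hF).hasFDerivAt.clm_apply
    (hasFDerivAt_const (Pi.single j 1) p)).fderiv w |>.trans (by simp)

lemma pdy_pdy (hF : ContDiffAt ℝ 2 F p) (i j : Fin n) :
    pdy i (pdy j F) p = fiberHessian F p (Pi.single i 1) (Pi.single j 1) :=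
  fderiv_pdy hF j _

lemma half_mul_pdy_pdy_sq (hF : ContDiffAt ℝ 2 F p) (i j : Fin n) :
    (1 / 2) * pdy i (pdy j (fun q => F q ^ 2)) p =
      fiberHessian (energy F) p (Pi.single i 1) (Pi.single j 1) := by
  have hpdy : ∀ (k : Fin n) (G : E n × E n → ℝ),
      pdy k (fun q => 2 * G q) = fun q => 2 * pdy k G q := fun k G => funext fun q =>
    congrArg (· (0, Pi.single k 1))
      (congrFun (fderiv_const_smul_field (𝕜 := ℝ) (f := G) (2 : ℝ)) q)
  have hsq : (fun q => F q ^ 2) = fun q => 2 * energy F q := funext fun q => by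
    rw [energy]; ring
  rw [hsq, hpdy, hpdy, ← pdy_pdy (contDiffAt_energy hF)]
  ring

lemma IsFinsler.isFinslerMetric (hF : IsFinsler F) : IsFinslerMetric F := by
  have hsmooth : ∀ p : E n × E n, p.2 ≠ 0 → ContDiffAt ℝ (⊤ : ℕ∞) F p := fun p hp =>
    hF.smooth.contDiffAt ((isOpen_ne_fun continuous_snd continuous_const).mem_nhds hp)
  refine ⟨hsmooth, fun x y c hc => by rw [pow_one, hF.homog x y c hc],
    fun p hp => hF.pos p.1 p.2 hp, fun p hp v hv => ?_⟩
  have hpos := (hF.posDef p.1 p.2 hp).dotProduct_mulVec_pos hv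
  rw [← sum_sum_apply_single_single]
  simp only [dotProduct, Matrix.mulVec, Matrix.of_apply, Prod.mk.eta,
    half_mul_pdy_pdy_sq (contDiffAt_infty.1 (hsmooth p hp) 2), Finset.mul_sum, star_trivial] at hpos
  refine hpos.trans_eq (Finset.sum_congr rfl fun i _ => Finset.sum_congr rfl fun j _ => ?_)
  ring

lemma D2phi_eq_fderiv_fderiv {φ : E n → E n} (hφ : ContDiff ℝ 2 φ) (x : E n)
    (s k l : Fin n) :
    D2phi φ x s k l = fderiv ℝ (fderiv ℝ φ) x (Pi.single s 1) (Pi.single k 1) l := by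
  have hφ' : HasFDerivAt (fderiv ℝ φ) (fderiv ℝ (fderiv ℝ φ) x) x :=
    ((hφ.fderiv_right one_add_one_eq_two.le).differentiable one_ne_zero x).hasFDerivAt
  have := hasFDerivAt_pi'.1 (hφ'.clm_apply (hasFDerivAt_const (Pi.single k 1) x)) l
  rw [D2phi, this.fderiv]
  simp

lemma deriv_pdy_sub_pdx {γ : ℝ → E n} {s : Set ℝ} {t : ℝ} (hγ : ContDiffOn ℝ 2 γ s)
    (hs : IsOpen s) (ht : t ∈ s) (hF : ContDiffAt ℝ 2 F (γ t, deriv γ t)) (i : Fin n) :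
    deriv (fun τ => pdy i F (γ τ, deriv γ τ)) t - pdx i F (γ t, deriv γ t) =
      eulerLagrange F (γ t, deriv γ t) (deriv (deriv γ) t) (Pi.single i 1) := by
  have hjet := (hasDerivAt_of_contDiffOn_two hγ hs ht).prodMk
    (hasDerivAt_deriv_of_contDiffOn_two hγ hs ht)
  have hmomentum : HasDerivAt (fun τ => pdy i F (γ τ, deriv γ τ))
      (fderiv ℝ (fiberDeriv F) (γ t, deriv γ t) (deriv γ t, deriv (deriv γ) t) (Pi.single i 1))
      t := by
    rw [← fderiv_pdy hF]
    have hpdy : DifferentiableAt ℝ (pdy i F) (γ t, deriv γ t) :=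
      (differentiableAt_fiberDeriv hF).clm_apply (differentiableAt_const _)
    exact hpdy.hasFDerivAt.comp_hasDerivAt t hjet
  rw [hmomentum.deriv, eulerLagrange, sub_apply]
  rfl

lemma isGeodesic_iff {γ : ℝ → E n} {t₁ t₂ : ℝ} (hF : IsFinslerMetric F) :
    IsGeodesic F γ t₁ t₂ ↔ t₁ < t₂ ∧ IsGeodesicOn F γ (Set.Ioo t₁ t₂) := by
  have hEL : ContDiffOn ℝ 2 γ (Set.Ioo t₁ t₂) → ∀ t ∈ Set.Ioo t₁ t₂, deriv γ t ≠ 0 →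
      (eulerLagrange F (γ t, deriv γ t) (deriv (deriv γ) t) = 0 ↔
        ∀ i, deriv (fun τ => pdy i F (γ τ, deriv γ τ)) t = pdx i F (γ t, deriv γ t)) :=
    fun hγ t ht hv => by
      simp only [clm_pi_ext_iff, zero_apply, ← sub_eq_zero (b := pdx _ F _),
        deriv_pdy_sub_pdx hγ isOpen_Ioo ht (hF.contDiffAt_two hv)]
  constructor
  · exact fun h => ⟨h.lt, h.smooth, h.vel, h.constSpeed, fun t ht =>
      (hEL h.smooth t ht (h.vel t ht)).2 fun i => h.eulerLagrange i t ht⟩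
  · exact fun ⟨hlt, h⟩ => ⟨hlt, h.contDiffOn, h.deriv_ne_zero, h.constSpeed, fun i t ht =>
      (hEL h.contDiffOn t ht (h.deriv_ne_zero t ht)).1 (h.eulerLagrange_eq_zero t ht) i⟩

/-- The second-order PDE system for `φ`, where `Fb` is the expression of `F` in the
`φ`-coordinates. -/
def SatisfiesFlatnessPDE (F Fb : E n × E n → ℝ) (φ : E n → E n) : Prop :=
  ∀ (x y : E n), y ≠ 0 → ∀ i : Fin n,
    (∑ s, pdx s (pdy i F) (x, y) * y s) - (∑ s, pdx i (pdy s F) (x, y) * y s) =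
    ∑ s, ∑ k, ∑ l, ∑ r,
      pdy r (pdy l Fb) (φ x, fderiv ℝ φ x y) *
        (D2phi φ x s k l * Dphi φ x i r - D2phi φ x i k l * Dphi φ x s r) *
        (y s * y k)

lemma sum_pdx_pdy_sub_sum_pdx_pdy (hF : IsFiberHomogeneous F 1) (hd : ContDiffAt ℝ 2 F p)
    (i : Fin n) :
    (∑ s, pdx s (pdy i F) p * p.2 s) - (∑ s, pdx i (pdy s F) p * p.2 s) =
      eulerLagrange F p 0 (Pi.single i 1) := by
  have hpdx : ∀ s j, pdx s (pdy j F) p =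
      fderiv ℝ (fiberDeriv F) p (Pi.single s 1, 0) (Pi.single j 1) := fun s j => fderiv_pdy hd j _
  have hfst : ∑ s, pdx s (pdy i F) p * p.2 s =
      fderiv ℝ (fiberDeriv F) p (p.2, 0) (Pi.single i 1) := by
    simpa [hpdx, mul_comm] using sum_smul_apply_single
      (((fderiv ℝ (fiberDeriv F) p).flip (Pi.single i 1)) ∘L .inl ℝ (E n) (E n)) p.2
  have hsnd : ∑ s, pdx i (pdy s F) p * p.2 s = baseDeriv F p (Pi.single i 1) := by
    have heuler := hF.fderiv_fiberDeriv_apply_self hd (Pi.single i 1, 0)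
    rw [← sum_smul_apply_single _ p.2] at heuler
    simpa [hpdx, baseDeriv, mul_comm] using heuler
  rw [hfst, hsnd]
  rfl

lemma sum_pdy_pdy_mul_D2phi {Fb : E n × E n → ℝ} {φ : E n → E n} {q : E n × E n}
    (hFb : ContDiffAt ℝ 2 Fb q) (hφ : ContDiff ℝ 2 φ) (x y : E n) (i : Fin n) :
    ∑ s, ∑ k, ∑ l, ∑ r, pdy r (pdy l Fb) q *
      (D2phi φ x s k l * Dphi φ x i r - D2phi φ x i k l * Dphi φ x s r) * (y s * y k) =
    fiberHessian Fb q (fderiv ℝ φ x (Pi.single i 1)) (fderiv ℝ (fderiv ℝ φ) x y y) -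
      fiberHessian Fb q (fderiv ℝ φ x y) (fderiv ℝ (fderiv ℝ φ) x (Pi.single i 1) y) := by
  set H := fiberHessian Fb q
  set A := fderiv ℝ φ x
  set D := fderiv ℝ (fderiv ℝ φ) x
  have hHessian : ∀ s k, ∑ l, ∑ r, pdy r (pdy l Fb) q *
      (D2phi φ x s k l * Dphi φ x i r - D2phi φ x i k l * Dphi φ x s r) =
      H (A (Pi.single i 1)) (D (Pi.single s 1) (Pi.single k 1)) -
        H (A (Pi.single s 1)) (D (Pi.single i 1) (Pi.single k 1)) := fun s k => by
    rw [Finset.sum_comm, ← sum_sum_apply_single_single H, ← sum_sum_apply_single_single H]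
    simp only [← Finset.sum_sub_distrib]
    refine Finset.sum_congr rfl fun r _ => Finset.sum_congr rfl fun l _ => ?_
    rw [pdy_pdy hFb, D2phi_eq_fderiv_fderiv hφ, D2phi_eq_fderiv_fderiv hφ]
    simp only [Dphi]
    ring
  simp only [← Finset.sum_mul, hHessian, sub_mul, Finset.sum_sub_distrib]
  exact congrArg₂ (· - ·)
    (sum_sum_apply_single_single
      ((ContinuousLinearMap.compL ℝ _ _ _ (H (A (Pi.single i 1)))).comp D) y y)
    (sum_sum_apply_single_single (H.bilinearComp A (D (Pi.single i 1))) y y)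

lemma satisfiesFlatnessPDE_iff (hF : IsFinslerMetric F) {Fb : E n × E n → ℝ} {φ φinv : E n → E n}
    (hφ : IsDiffeoOntoRange φ φinv) (hFb : ∀ x y, Fb (φ x, fderiv ℝ φ x y) = F (x, y))
    (hFb' : ContDiffOn ℝ (⊤ : ℕ∞) Fb {p | p.1 ∈ Set.range φ ∧ p.2 ≠ 0}) :
    SatisfiesFlatnessPDE F Fb φ ↔
      ∀ x y : E n, y ≠ 0 → eulerLagrange F (x, y) (lineAccel φ x y) = 0 := by
  have hφ2 : ContDiff ℝ 2 φ := contDiff_infty.1 hφ.contDiff 2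
  refine forall₃_congr fun x y hy => ?_
  have hF2 : ContDiffAt ℝ 2 F (x, y) := hF.contDiffAt_two hy
  have hFb2 : ContDiffAt ℝ 2 Fb (φ x, fderiv ℝ φ x y) :=
    contDiffAt_infty.1 (hφ.contDiffAt_of_contDiffOn hFb' x hy) 2
  have hHessian : ∀ (u : E n) (w : E n), fiberHessian Fb (φ x, fderiv ℝ φ x y)
      (fderiv ℝ φ x u) w = fiberHessian F (x, y) u ((fderiv ℝ φ x).inverse w) := fun u w => by
    rw [← fiberHessian_apply_of_eventuallyEq (.of_forall (hFb x)) hF2 hFb2,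
      (hφ.isInvertible_fderiv x).self_apply_inverse]
  have hrhs : ∀ i, fiberHessian Fb (φ x, fderiv ℝ φ x y) (fderiv ℝ φ x (Pi.single i 1))
        (fderiv ℝ (fderiv ℝ φ) x y y) -
      fiberHessian Fb (φ x, fderiv ℝ φ x y) (fderiv ℝ φ x y)
        (fderiv ℝ (fderiv ℝ φ) x (Pi.single i 1) y) =
      -fiberHessian F (x, y) (lineAccel φ x y) (Pi.single i 1) := fun i => by
    rw [hHessian, hHessian, fiberHessian_comm hF2 y, hF.homogeneous.fiberHessian_apply_self hF2,
      sub_zero, lineAccel, map_neg, neg_apply, neg_neg, fiberHessian_comm hF2]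
  rw [clm_pi_ext_iff]
  refine forall_congr' fun i => ?_
  rw [sum_pdx_pdy_sub_sum_pdx_pdy hF.homogeneous hF2, sum_pdy_pdy_mul_D2phi hFb2 hφ2, hrhs,
    eulerLagrange_eq_add_fiberHessian F (x, y) 0 (lineAccel φ x y), sub_zero, add_apply, zero_apply,
    eq_neg_iff_add_eq_zero]

lemma forall_isGeodesic_isStraightOn_iff (hF : IsFinslerMetric F) {Fb : E n × E n → ℝ}
    {φ φinv : E n → E n} (hφ : IsDiffeoOntoRange φ φinv)
    (hFb : ∀ x y, Fb (φ x, fderiv ℝ φ x y) = F (x, y))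
    (hFb' : ContDiffOn ℝ (⊤ : ℕ∞) Fb {p | p.1 ∈ Set.range φ ∧ p.2 ≠ 0}) :
    (∀ γ t₁ t₂, IsGeodesic F γ t₁ t₂ → IsStraightOn (φ ∘ γ) (Set.Ioo t₁ t₂)) ↔
      SatisfiesFlatnessPDE F Fb φ := by
  simp only [isGeodesic_iff hF, and_imp]
  rw [satisfiesFlatnessPDE_iff hF hφ hFb hFb', forall_isStraightOn_comp_iff hF
    (contDiff_infty.1 hφ.contDiff 2) hφ.isInvertible_fderiv]

end Coordinates

/-- `(ℝⁿ, F)` is projectively flat iff the second-order PDE system is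
solvable by a smooth diffeomorphism `φ` onto an open subset of `ℝⁿ`. -/
theorem statement6 {n : ℕ} (F : E n × E n → ℝ) (hF : IsFinsler F) :
    ProjFlat F ↔
    (∃ φ φinv : E n → E n, ∃ Fb : E n × E n → ℝ,
      ContDiff ℝ (⊤ : ℕ∞) φ ∧ IsOpen (Set.range φ) ∧ ContDiffOn ℝ (⊤ : ℕ∞) φinv (Set.range φ) ∧
      (∀ x : E n, φinv (φ x) = x) ∧
      (∀ (x y : E n), Fb (φ x, fderiv ℝ φ x y) = F (x, y)) ∧
      ContDiffOn ℝ (⊤ : ℕ∞) Fb {p : E n × E n | p.1 ∈ Set.range φ ∧ p.2 ≠ 0} ∧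
      ∀ (x y : E n), y ≠ 0 → ∀ i : Fin n,
        (∑ s, pdx s (pdy i F) (x, y) * y s) - (∑ s, pdx i (pdy s F) (x, y) * y s) =
        ∑ s, ∑ k, ∑ l, ∑ r,
          pdy r (pdy l Fb) (φ x, fderiv ℝ φ x y) *
            (D2phi φ x s k l * Dphi φ x i r - D2phi φ x i k l * Dphi φ x s r) *
            (y s * y k)) := by
  constructor
  · rintro ⟨φ, φinv, hsmooth, hopen, hinv, hleft, hstraight⟩
    have hφ : IsDiffeoOntoRange φ φinv := ⟨hsmooth, hopen, hinv, hleft⟩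
    have hFb := hφ.expressionInCoords_apply F
    have hFb' := hφ.contDiffOn_expressionInCoords hF.smooth
    exact ⟨φ, φinv, expressionInCoords φinv F, hsmooth, hopen, hinv, hleft, hFb, hFb',
      (forall_isGeodesic_isStraightOn_iff hF.isFinslerMetric hφ hFb hFb').1 hstraight⟩
  · rintro ⟨φ, φinv, Fb, hsmooth, hopen, hinv, hleft, hFb, hFb', hpde⟩
    exact ⟨φ, φinv, hsmooth, hopen, hinv, hleft,
      (forall_isGeodesic_isStraightOn_iff hF.isFinslerMetric ⟨hsmooth, hopen, hinv, hleft⟩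
        hFb hFb').2 hpde⟩
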